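/- Let X be a complex Banach space and T a bounded linear operator on X. Then T is almost invertible if and only if 0 ∉ acc^{ω₁} σ(T), where ω₁ is the first uncountable ordinal. -/

import Mathlib

open Ordinal Set

/-- The `α`-th Cantor–Bendixson derivative of a set `A ⊆ ℂ`, defined by transfinite
recursion: `cbd A 0 = A`, `cbd A (β+1) = derivedSet (cbd A β)` (the set of accumulation
points of `cbd A β`), and `cbd A α = ⋂_{β < α} cbd A β` for limit ordinals `α`. -/
noncomputable def cbd (A : Set ℂ) (α : Ordinal) : Set ℂ :=
  Ordinal.limitRecOn α A (fun _ ih => derivedSet ih)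
    (fun α _ ih => ⋂ (β : Set.Iio α), ih β.1 β.2)

variable {X : Type*} [NormedAddCommGroup X] [NormedSpace ℂ X] [CompleteSpace X]

/-- The restriction `T_M` of a bounded operator `T` to a `T`-invariant subspace `M`. -/
noncomputable def restr (T : X →L[ℂ] X) (M : Submodule ℂ X)
    (hM : ∀ x ∈ M, T x ∈ M) : M →L[ℂ] M :=
  { toLinearMap := T.toLinearMap.restrict hM
    cont := (T.continuous.comp continuous_subtype_val).subtype_mk _ }


/-- `T` is almost invertible: there is `(M, N) ∈ Red T` (a pair of closed
`T`-invariant subspaces with `X = M ⊕ N`) such that `T_M` is invertible and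
`σ(T_N)` is at most countable. -/
def AlmostInv (T : X →L[ℂ] X) : Prop :=
  ∃ (M N : Submodule ℂ X) (hM : ∀ x ∈ M, T x ∈ M) (hN : ∀ x ∈ N, T x ∈ N),
    IsClosed (M : Set X) ∧ IsClosed (N : Set X) ∧ IsCompl M N ∧
    IsUnit (restr T M hM) ∧ (spectrum ℂ (restr T N hN)).Countable

theorem cbd_zero (A : Set ℂ) : cbd A 0 = A := by
  simp [cbd]

theorem cbd_succ (A : Set ℂ) (α : Ordinal) : cbd A (Order.succ α) = derivedSet (cbd A α) := by
  simp [cbd]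

theorem cbd_limit (A : Set ℂ) {α : Ordinal} (h : Order.IsSuccLimit α) :
    cbd A α = ⋂ (β : Set.Iio α), cbd A β.1 := by
  rw [cbd, Ordinal.limitRecOn_limit _ _ _ _ h]
  rfl

theorem isClosed_cbd {A : Set ℂ} (hA : IsClosed A) (α : Ordinal) : IsClosed (cbd A α) := by
  induction α using Ordinal.limitRecOn with
  | zero => rwa [cbd_zero]
  | add_one α ih => rw [← Order.succ_eq_add_one, cbd_succ]; exact isClosed_derivedSet _
  | limit α h ih =>
    rw [cbd_limit A h]
    exact isClosed_iInter fun β => ih β.1 β.2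

theorem cbd_anti {A : Set ℂ} (hA : IsClosed A) {α β : Ordinal} (h : α ≤ β) :
    cbd A β ⊆ cbd A α := by
  induction β using Ordinal.limitRecOn with
  | zero => rw [nonpos_iff_eq_zero.1 h]
  | add_one β ih =>
    rcases h.lt_or_eq with h | h
    · rw [← Order.succ_eq_add_one] at h ⊢
      refine subset_trans ?_ (ih (Order.lt_succ_iff.1 h))
      rw [cbd_succ]
      exact (isClosed_iff_derivedSet_subset _).1 (isClosed_cbd hA β)
    · rw [h]
  | limit β hβ ih =>
    rcases h.lt_or_eq with h | h
    · rw [cbd_limit A hβ]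
      exact iInter_subset (fun β' : Set.Iio β => cbd A β'.1) ⟨α, h⟩
    · rw [h]

theorem countable_diff_derivedSet (s : Set ℂ) : (s \ derivedSet s).Countable := by
  have hd : DiscreteTopology (s \ derivedSet s : Set ℂ) := by
    rw [discreteTopology_subtype_iff]
    intro x hx
    have h2 : ¬ AccPt x (Filter.principal s) := hx.2
    rw [AccPt, Filter.not_neBot] at h2
    exact le_bot_iff.1 (h2 ▸ inf_le_inf_left _ (Filter.principal_mono.2 Set.sdiff_subset))
  have : Countable (s \ derivedSet s : Set ℂ) := by
    exact TopologicalSpace.separableSpace_iff_countable.1 inferInstance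
  exact Set.countable_coe_iff.1 this

theorem countable_Iio_of_lt {α : Ordinal} (h : α < ω₁) : Countable (Set.Iio α) := by
  rw [← Cardinal.mk_le_aleph0_iff, Cardinal.mk_Iio_ordinal, Cardinal.lift_le_aleph0]
  have : α.card < Cardinal.aleph 1 := by
    rw [← Cardinal.ord_aleph] at h
    exact Cardinal.lt_ord.1 h
  rw [← Cardinal.succ_aleph0] at this
  exact Order.lt_succ_iff.1 this

theorem countable_diff_cbd {A : Set ℂ} {α : Ordinal} (h : α < ω₁) :
    (A \ cbd A α).Countable := by
  induction α using Ordinal.limitRecOn with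
  | zero => simp [cbd_zero]
  | add_one β ih =>
    rw [← Order.succ_eq_add_one] at h ⊢
    refine ((ih ((Order.lt_succ β).trans h)).union (countable_diff_derivedSet (cbd A β))).mono ?_
    rw [cbd_succ]
    intro x hx
    by_cases hb : x ∈ cbd A β
    · exact Or.inr ⟨hb, hx.2⟩
    · exact Or.inl ⟨hx.1, hb⟩
  | limit β hβ ih =>
    rw [cbd_limit A hβ, Set.sdiff_iInter]
    have := countable_Iio_of_lt h
    exact countable_iUnion fun γ => ih γ.1 γ.2 (lt_trans γ.2 h)

theorem isSuccLimit_omega1 : Order.IsSuccLimit (ω₁ : Ordinal) :=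
  Cardinal.isSuccLimit_omega 1

theorem not_mem_cbd_iff.{u} {K : Set ℂ} (hK : IsClosed K) (x : ℂ) :
    x ∉ cbd K (ω₁ : Ordinal.{u}) ↔ ∃ ε > 0, (K ∩ Metric.closedBall x ε).Countable := by
  constructor
  · intro h
    rw [cbd_limit K isSuccLimit_omega1] at h
    simp only [mem_iInter, not_forall] at h
    obtain ⟨⟨α, hα⟩, h⟩ := h
    have h1 : (cbd K α)ᶜ ∈ nhds x := (isClosed_cbd hK α).isOpen_compl.mem_nhds h
    obtain ⟨ε, hε, h2⟩ := Metric.nhds_basis_closedBall.mem_iff.1 h1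
    refine ⟨ε, hε, (countable_diff_cbd (A := K) hα).mono ?_⟩
    intro y hy
    exact ⟨hy.1, h2 hy.2⟩
  · rintro ⟨ε, hε, hc⟩ hx
    have h0 : ∀ y : (K ∩ Metric.closedBall x ε : Set ℂ), ∃ α < (ω₁ : Ordinal.{u}),
        y.1 ∈ cbd K α → y.1 ∈ cbd K (ω₁ : Ordinal.{u}) := by
      intro y
      by_cases hy : y.1 ∈ cbd K (ω₁ : Ordinal.{u})
      · exact ⟨0, Ordinal.omega_pos 1, fun _ => hy⟩
      · rw [cbd_limit K isSuccLimit_omega1] at hy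
        simp only [mem_iInter, not_forall] at hy
        obtain ⟨⟨α, hα⟩, h⟩ := hy
        exact ⟨α, hα, fun h' => (h h').elim⟩
    choose f hf hf' using h0
    have := hc.to_subtype
    have hsup : ⨆ y, f y < (ω₁ : Ordinal.{u}) := Ordinal.iSup_lt_omega_one hf
    set α := ⨆ y, f y with hα
    have hle : ∀ y, f y ≤ α := fun y => Ordinal.le_iSup f y
    have hs : Order.succ α < (ω₁ : Ordinal.{u}) := isSuccLimit_omega1.succ_lt hsup
    have hsub : ∀ β, cbd K β ⊆ K := fun β => by
      conv_rhs => rw [← cbd_zero K]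
      exact cbd_anti hK (zero_le)
    have hpre : Preperfect (Metric.ball x ε ∩ cbd K (ω₁ : Ordinal.{u})) := by
      rintro y ⟨hy1, hy2⟩
      have h3 : y ∈ derivedSet (cbd K α) := by
        rw [← cbd_succ]; exact cbd_anti hK hs.le hy2
      have h4 := AccPt.nhds_inter h3 (Metric.isOpen_ball.mem_nhds hy1)
      refine h4.mono (Filter.principal_mono.2 ?_)
      rintro z ⟨hz1, hz2⟩
      refine ⟨hz1, ?_⟩
      let z' : (K ∩ Metric.closedBall x ε : Set ℂ) :=
        ⟨z, hsub _ hz2, Metric.ball_subset_closedBall hz1⟩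
      exact hf' z' (cbd_anti hK (hle z') hz2)
    have hperf := hpre.perfect_closure
    obtain ⟨g, hg, -, hinj⟩ := hperf.exists_nat_bool_injection
      ⟨x, subset_closure ⟨Metric.mem_ball_self hε, hx⟩⟩
    have hcl : closure (Metric.ball x ε ∩ cbd K (ω₁ : Ordinal.{u})) ⊆ K ∩ Metric.closedBall x ε := by
      refine closure_minimal ?_ (hK.inter Metric.isClosed_closedBall)
      exact fun z hz => ⟨hsub _ hz.2, Metric.ball_subset_closedBall hz.1⟩
    have hr := hc.mono (hg.trans hcl)
    rw [← image_univ] at hr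
    have hu := Set.countable_of_injective_of_countable_image hinj.injOn hr
    rw [Set.countable_univ_iff] at hu
    have h5 := Cardinal.mk_le_aleph0_iff.2 hu
    have h6 : Cardinal.mk (ℕ → Bool) = 2 ^ Cardinal.aleph0 := by
      rw [← Cardinal.power_def]; simp
    rw [h6] at h5
    exact absurd h5 (not_le.2 (Cardinal.cantor _))

section Riesz
open MeasureTheory

theorem circleIntegral_clm {E F : Type*} [NormedAddCommGroup E] [NormedSpace ℂ E] [CompleteSpace E]
    [NormedAddCommGroup F] [NormedSpace ℂ F] [CompleteSpace F] (L : E →L[ℂ] F) {f : ℂ → E}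
    {c : ℂ} {r : ℝ} (hf : CircleIntegrable f c r) :
    L (∮ z in C(c, r), f z) = ∮ z in C(c, r), L (f z) := by
  simp only [circleIntegral]
  rw [← L.intervalIntegral_comp_comm hf.out]
  simp

theorem circleIntegral_swap {E : Type*} [NormedAddCommGroup E] [NormedSpace ℂ E] [CompleteSpace E]
    {f : ℂ → ℂ → E} {r s : ℝ} (hr : 0 ≤ r) (hs : 0 ≤ s)
    (hf : ContinuousOn (fun p : ℂ × ℂ => f p.1 p.2)
      (Metric.sphere 0 r ×ˢ Metric.sphere 0 s)) :
    (∮ w in C(0, r), ∮ z in C(0, s), f w z) = ∮ z in C(0, s), ∮ w in C(0, r), f w z := by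
  have hcont : Continuous (fun p : ℝ × ℝ => f (circleMap 0 r p.1) (circleMap 0 s p.2)) := by
    have : Continuous (fun p : ℝ × ℝ => ((circleMap 0 r p.1, circleMap 0 s p.2) : ℂ × ℂ)) := by
      fun_prop
    exact hf.comp_continuous this
      (fun p => ⟨circleMap_mem_sphere _ hr _, circleMap_mem_sphere _ hs _⟩)
  simp only [circleIntegral_def_Icc, ← integral_smul]
  rw [integral_integral_swap]
  · simp only [smul_smul, mul_comm]
  · rw [Measure.prod_restrict]
    apply ContinuousOn.integrableOn_compact (isCompact_Icc.prod isCompact_Icc)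
    apply Continuous.continuousOn
    simp only [Function.uncurry_def, deriv_circleMap]
    have h1 := continuous_circleMap 0 r
    have h2 := continuous_circleMap 0 s
    exact ((h1.comp continuous_fst).mul continuous_const).smul
      (((h2.comp continuous_snd).mul continuous_const).smul hcont)

set_option linter.unusedSectionVars false

variable {A : Type*} [NormedRing A] [NormedAlgebra ℂ A] [CompleteSpace A]

theorem resolvent_continuousOn (a : A) : ContinuousOn (resolvent (R := ℂ) a) (spectrum ℂ a)ᶜ := by
  intro z hz
  rw [spectrum, compl_compl] at hz
  exact (spectrum.hasDerivAt_resolvent_const_left hz).continuousAt.continuousWithinAt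

theorem mul_resolvent (a : A) {z : ℂ} (hz : z ∉ spectrum ℂ a) :
    (algebraMap ℂ A z - a) * resolvent a z = 1 :=
  Ring.mul_inverse_cancel _ (by simpa [spectrum.mem_iff] using hz)

theorem resolvent_mul (a : A) {z : ℂ} (hz : z ∉ spectrum ℂ a) :
    resolvent a z * (algebraMap ℂ A z - a) = 1 :=
  Ring.inverse_mul_cancel _ (by simpa [spectrum.mem_iff] using hz)

theorem commute_resolvent {a b : A} (h : Commute b a) (z : ℂ) : Commute b (resolvent a z) := by
  by_cases hz : z ∈ spectrum ℂ a
  · rw [spectrum.resolvent_zero_of_mem_spectrum hz]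
    exact Commute.zero_right b
  · have h1 : Commute b (algebraMap ℂ A z - a) :=
      (Algebra.commute_algebraMap_right z b).sub_right h
    have h2 := mul_resolvent a hz
    have h3 := resolvent_mul a hz
    calc b * resolvent a z
        = resolvent a z * (algebraMap ℂ A z - a) * b * resolvent a z := by rw [h3, one_mul]
      _ = resolvent a z * (b * ((algebraMap ℂ A z - a) * resolvent a z)) := by
          rw [mul_assoc (resolvent a z), ← h1.eq]; simp only [mul_assoc]
      _ = resolvent a z * b := by rw [h2, mul_one]

theorem commute_circleIntegral {b : A} {f : ℂ → A} {r : ℝ}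
    (hf : CircleIntegrable f 0 r) (h : ∀ z, Commute b (f z)) :
    Commute b (∮ z in C(0, r), f z) := by
  have h1 := circleIntegral_clm (ContinuousLinearMap.mul ℂ A b) hf
  have h2 := circleIntegral_clm ((ContinuousLinearMap.mul ℂ A).flip b) hf
  simp only [ContinuousLinearMap.mul_apply', ContinuousLinearMap.flip_apply] at h1 h2
  rw [Commute, SemiconjBy, h1, h2]
  congr 1
  funext z
  exact h z

theorem integral_inv_outside {r : ℝ} (hr : 0 ≤ r) {w : ℂ} (hw : r < ‖w‖) :
    (∮ z in C(0, r), (w - z)⁻¹) = 0 := by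
  have hne : ∀ z ∈ Metric.closedBall (0 : ℂ) r, w - z ≠ 0 := by
    intro z hz h
    rw [sub_eq_zero] at h
    subst h
    simp at hz
    linarith
  apply Complex.circleIntegral_eq_zero_of_differentiable_on_off_countable hr countable_empty
  · intro z hz
    have := hne z hz
    apply ContinuousAt.continuousWithinAt
    fun_prop (disch := assumption)
  · intro z hz
    have := hne z (Metric.ball_subset_closedBall hz.1)
    fun_prop (disch := assumption)

theorem S_integrable (a : A) {r : ℝ} (hr : 0 ≤ r)
    (hs : ∀ z ∈ spectrum ℂ a, ‖z‖ ≠ r) {w : ℂ} (hw : ‖w‖ ≠ r) :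
    CircleIntegrable (fun z => (w - z)⁻¹ • resolvent a z) 0 r := by
  apply ContinuousOn.circleIntegrable hr
  apply ContinuousOn.smul
  · intro z hz
    have : w - z ≠ 0 := by
      intro h
      rw [sub_eq_zero] at h
      subst h
      simp at hz
      exact hw hz
    apply ContinuousAt.continuousWithinAt
    fun_prop (disch := assumption)
  · exact (resolvent_continuousOn a).mono fun z hz h => hs z h (by simpa using hz)

theorem resolvent_integrable (a : A) {r : ℝ} (hr : 0 ≤ r)
    (hs : ∀ z ∈ spectrum ℂ a, ‖z‖ ≠ r) :
    CircleIntegrable (fun z => resolvent a z) 0 r := by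
  apply ContinuousOn.circleIntegrable hr
  exact (resolvent_continuousOn a).mono fun z hz h => hs z h (by simpa using hz)

theorem S_eq (a : A) {r : ℝ} (hr : 0 ≤ r)
    (hs : ∀ z ∈ spectrum ℂ a, ‖z‖ ≠ r) {w : ℂ} (hw : ‖w‖ ≠ r) :
    (algebraMap ℂ A w - a) * (∮ z in C(0, r), (w - z)⁻¹ • resolvent a z) =
      (∮ z in C(0, r), resolvent a z) + (∮ z in C(0, r), (w - z)⁻¹) • 1 := by
  have h1 := circleIntegral_clm (ContinuousLinearMap.mul ℂ A (algebraMap ℂ A w - a))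
    (S_integrable a hr hs hw)
  simp only [ContinuousLinearMap.mul_apply'] at h1
  rw [h1, ← circleIntegral.integral_smul_const, ← circleIntegral.integral_add]
  · apply circleIntegral.integral_congr hr
    intro z hz
    have hz' : ‖z‖ = r := by simpa using hz
    have hzs : z ∉ spectrum ℂ a := fun h => hs z h hz'
    have hne : w - z ≠ 0 := by
      intro h
      rw [sub_eq_zero] at h
      exact hw (h ▸ hz')
    have h2 : (algebraMap ℂ A w - a) * resolvent a z = (w - z) • resolvent a z + 1 := by
      rw [← mul_resolvent a hzs, sub_smul, Algebra.smul_def, Algebra.smul_def]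
      noncomm_ring
    simp only [mul_smul_comm, h2, smul_add, smul_smul, inv_mul_cancel₀ hne, one_smul]
  · exact resolvent_integrable a hr hs
  · apply ContinuousOn.circleIntegrable hr
    apply ContinuousOn.smul _ continuousOn_const
    intro z hz
    have hz' : ‖z‖ = r := by simpa using hz
    have hne : w - z ≠ 0 := by
      intro h
      rw [sub_eq_zero] at h
      exact hw (h ▸ hz')
    apply ContinuousAt.continuousWithinAt
    fun_prop (disch := assumption)

theorem riesz (a : A) {r s : ℝ} (hr : 0 < r) (hrs : r < s)
    (hσ : ∀ z ∈ spectrum ℂ a, ¬ (r ≤ ‖z‖ ∧ ‖z‖ ≤ s)) :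
    ∃ P : A, P * P = P ∧ (∀ b, Commute b a → Commute b P) ∧
      (∃ S, a * S = 1 - P ∧ ∀ b, Commute b a → Commute b S) ∧
      (∀ w : ℂ, r < ‖w‖ → ∃ S, (algebraMap ℂ A w - a) * S = P ∧
        ∀ b, Commute b a → Commute b S) := by
  have hσr : ∀ z ∈ spectrum ℂ a, ‖z‖ ≠ r := fun z hz h => hσ z hz ⟨h.ge, h.le.trans hrs.le⟩
  have hσs : ∀ z ∈ spectrum ℂ a, ‖z‖ ≠ s := fun z hz h => hσ z hz ⟨hrs.le.trans h.ge, h.le⟩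
  have hπ : (2 * Real.pi * Complex.I : ℂ) ≠ 0 := Complex.two_pi_I_ne_zero
  set c : ℂ := (2 * Real.pi * Complex.I : ℂ)⁻¹ with hc
  have hP : ∀ b, Commute b a → Commute b (c • ∮ z in C(0, r), resolvent a z) := fun b hb =>
    (commute_circleIntegral (resolvent_integrable a hr.le hσr)
      (fun z => commute_resolvent hb z)).smul_right c
  have hS : ∀ w : ℂ, ‖w‖ ≠ r → ∀ b, Commute b a →
      Commute b (c • ∮ z in C(0, r), (w - z)⁻¹ • resolvent a z) := fun w hw b hb =>
    (commute_circleIntegral (S_integrable a hr.le hσr hw)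
      (fun z => (commute_resolvent hb z).smul_right _)).smul_right c
  have hout : ∀ w : ℂ, r < ‖w‖ →
      (algebraMap ℂ A w - a) * (c • ∮ z in C(0, r), (w - z)⁻¹ • resolvent a z) =
        c • ∮ z in C(0, r), resolvent a z := by
    intro w hw
    rw [mul_smul_comm, S_eq a hr.le hσr hw.ne', integral_inv_outside hr.le hw, zero_smul, add_zero]
  refine ⟨c • ∮ z in C(0, r), resolvent a z, ?_, hP, ?_, ?_⟩
  · have hrot : (∮ z in C(0, s), resolvent a z) = ∮ z in C(0, r), resolvent a z := by
      apply Complex.circleIntegral_eq_of_differentiable_on_annulus_off_countable hr hrs.le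
        countable_empty
      · refine (resolvent_continuousOn a).mono fun z hz h => hσ z h ?_
        simpa [and_comm] using hz
      · intro z hz
        have hz2 : z ∉ spectrum ℂ a := fun h => by
          have := hz.1
          simp at this
          exact hσ z h ⟨this.2.le, this.1.le⟩
        rw [spectrum, Set.mem_compl_iff, not_not] at hz2
        exact (spectrum.hasDerivAt_resolvent_const_left hz2).differentiableAt
    set P := c • ∮ z in C(0, r), resolvent a z with hPdef
    have h1 := circleIntegral_clm ((ContinuousLinearMap.mul ℂ A).flip P)
      (resolvent_integrable a (hr.le.trans hrs.le) hσs)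
    simp only [ContinuousLinearMap.mul_apply', ContinuousLinearMap.flip_apply] at h1
    have h2 : (∮ w in C(0, s), resolvent a w * P) =
        ∮ w in C(0, s), ∮ z in C(0, r), c • (w - z)⁻¹ • resolvent a z := by
      apply circleIntegral.integral_congr (hr.le.trans hrs.le)
      intro w hw
      have hw' : ‖w‖ = s := by simpa using hw
      have hws : w ∉ spectrum ℂ a := fun h => hσs w h hw'
      simp only
      rw [← hout w (by rw [hw']; exact hrs), ← mul_assoc, resolvent_mul a hws, one_mul,
        circleIntegral.integral_smul]
    have h3 : (∮ z in C(0, r), ∮ w in C(0, s), c • (w - z)⁻¹ • resolvent a z) =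
        ∮ z in C(0, r), resolvent a z := by
      apply circleIntegral.integral_congr hr.le
      intro z hz
      have hz' : ‖z‖ = r := by simpa using hz
      simp only
      rw [circleIntegral.integral_smul, circleIntegral.integral_smul_const,
        circleIntegral.integral_sub_inv_of_mem_ball (by simpa [hz'] using hrs), smul_smul, hc,
        inv_mul_cancel₀ hπ, one_smul]
    have h4 : P * P = (c • ∮ z in C(0, s), resolvent a z) * P := by rw [hrot]
    rw [h4, smul_mul_assoc, h1, h2, circleIntegral_swap (hr.le.trans hrs.le) hr.le, h3]
    apply ContinuousOn.const_smul
    apply ContinuousOn.smul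
    · rintro ⟨w, z⟩ ⟨hw, hz⟩
      have hw' : ‖w‖ = s := by simpa using hw
      have hz' : ‖z‖ = r := by simpa using hz
      have hne : w - z ≠ 0 := by
        intro h
        rw [sub_eq_zero] at h
        rw [h, hz'] at hw'
        exact hrs.ne hw'
      apply ContinuousAt.continuousWithinAt
      exact ContinuousAt.inv₀ (by fun_prop) hne
    · have : ContinuousOn (resolvent (R := ℂ) a) (Metric.sphere 0 r) :=
        (resolvent_continuousOn a).mono fun z hz h => hσr z h (by simpa using hz)
      exact this.comp continuousOn_snd fun p hp => hp.2
  · refine ⟨c • ∮ z in C(0, r), (0 - z)⁻¹ • resolvent a z, ?_, hS 0 (by simpa using hr.ne)⟩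
    have h0 := S_eq a hr.le hσr (w := 0) (by simpa using hr.ne)
    have h1 : (∮ z in C(0, r), ((0 : ℂ) - z)⁻¹) = -(2 * Real.pi * Complex.I) := by
      rw [← circleIntegral.integral_sub_center_inv 0 hr.ne', ← neg_one_smul ℂ,
        ← circleIntegral.integral_smul]
      congr 1
      funext z
      simp [inv_neg]
    rw [h1, map_zero, _root_.zero_sub, neg_mul, neg_eq_iff_eq_neg] at h0
    rw [mul_smul_comm, h0, neg_add, smul_add, ← neg_smul, neg_neg, smul_smul, hc,
      inv_mul_cancel₀ hπ, one_smul, smul_neg]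
    abel
  · intro w hw
    exact ⟨_, hout w hw, hS w hw.ne'⟩

end Riesz

theorem restr_coe (T : X →L[ℂ] X) (M : Submodule ℂ X) (hM : ∀ x ∈ M, T x ∈ M) (x : M) :
    (restr T M hM x : X) = T x := rfl

theorem isUnit_restr {T S : X →L[ℂ] X} {M : Submodule ℂ X} (hM : ∀ x ∈ M, T x ∈ M)
    (hS : ∀ x ∈ M, S x ∈ M) (h1 : ∀ x ∈ M, T (S x) = x) (h2 : ∀ x ∈ M, S (T x) = x) :
    IsUnit (restr T M hM) := by
  refine ⟨⟨restr T M hM, restr S M hS, ?_, ?_⟩, rfl⟩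
  · ext x
    exact h1 x x.2
  · ext x
    exact h2 x x.2

theorem invariant_sub {T : X →L[ℂ] X} {M : Submodule ℂ X} (hM : ∀ x ∈ M, T x ∈ M) (w : ℂ) :
    ∀ x ∈ M, (algebraMap ℂ (X →L[ℂ] X) w - T) x ∈ M := by
  intro x hx
  simpa [Algebra.algebraMap_eq_smul_one] using M.sub_mem (M.smul_mem w hx) (hM x hx)

theorem sub_restr {T : X →L[ℂ] X} {M : Submodule ℂ X} (hM : ∀ x ∈ M, T x ∈ M) (w : ℂ) :
    algebraMap ℂ (M →L[ℂ] M) w - restr T M hM =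
      restr (algebraMap ℂ (X →L[ℂ] X) w - T) M (invariant_sub hM w) := by
  ext x
  simp [Algebra.algebraMap_eq_smul_one, restr_coe]

theorem spectrum_subset {T : X →L[ℂ] X} {M N : Submodule ℂ X} (hM : ∀ x ∈ M, T x ∈ M)
    (hN : ∀ x ∈ N, T x ∈ N) (hMN : IsCompl M N) (hMc : IsClosed (M : Set X))
    (hNc : IsClosed (N : Set X)) :
    spectrum ℂ T ⊆ spectrum ℂ (restr T M hM) ∪ spectrum ℂ (restr T N hN) := by
  intro w hw
  by_contra h
  rw [Set.mem_union, not_or] at h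
  obtain ⟨h1, h2⟩ := h
  have := hMc.completeSpace_coe
  have := hNc.completeSpace_coe
  rw [spectrum.mem_iff, not_not, sub_restr, ContinuousLinearMap.isUnit_iff_bijective] at h1 h2
  refine hw ?_
  rw [spectrum.mem_resolventSet_iff, ContinuousLinearMap.isUnit_iff_bijective]
  set S := algebraMap ℂ (X →L[ℂ] X) w - T with hSdef
  have hSM : ∀ x ∈ M, S x ∈ M := invariant_sub hM w
  have hSN : ∀ x ∈ N, S x ∈ N := invariant_sub hN w
  have hz : ∀ x, x ∈ M → x ∈ N → x = 0 := fun x hx hy => by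
    have := hMN.disjoint.le_bot (Submodule.mem_inf.2 ⟨hx, hy⟩)
    simpa using this
  have hd : ∀ x, ∃ m ∈ M, ∃ n ∈ N, m + n = x := fun x =>
    Submodule.mem_sup.1 (hMN.sup_eq_top ▸ Submodule.mem_top)
  constructor
  · rw [injective_iff_map_eq_zero]
    intro x hx
    obtain ⟨m, hm, n, hn, rfl⟩ := hd x
    rw [map_add] at hx
    have e1 : S m = 0 := by
      apply hz _ (hSM m hm)
      rw [eq_neg_of_add_eq_zero_left hx]
      exact N.neg_mem (hSN n hn)
    have e2 : S n = 0 := by simpa [e1] using hx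
    have f1 : (⟨m, hm⟩ : M) = 0 := by
      apply h1.1
      rw [map_zero]
      exact Subtype.ext e1
    have f2 : (⟨n, hn⟩ : N) = 0 := by
      apply h2.1
      rw [map_zero]
      exact Subtype.ext e2
    have g1 : m = 0 := congrArg Subtype.val f1
    have g2 : n = 0 := congrArg Subtype.val f2
    rw [g1, g2, add_zero]
  · intro y
    obtain ⟨m, hm, n, hn, rfl⟩ := hd y
    obtain ⟨m', hm'⟩ := h1.2 ⟨m, hm⟩
    obtain ⟨n', hn'⟩ := h2.2 ⟨n, hn⟩
    refine ⟨m' + n', ?_⟩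
    have g1 : S m' = m := congrArg Subtype.val hm'
    have g2 : S n' = n := congrArg Subtype.val hn'
    rw [map_add, g1, g2]

theorem exists_radii {K : Set ℂ} (hK : IsCompact K) {ε : ℝ} (hε : 0 < ε)
    (hc : (K ∩ Metric.closedBall 0 ε).Countable) :
    ∃ r s : ℝ, 0 < r ∧ r < s ∧ r < ε ∧ ∀ z ∈ K, ¬ (r ≤ ‖z‖ ∧ ‖z‖ ≤ s) := by
  have hc' : ((fun z : ℂ => ‖z‖) '' (K ∩ Metric.closedBall 0 ε)).Countable := hc.image _
  obtain ⟨ρ, hρ, hρ0, hρε⟩ := (hc'.dense_compl ℝ).exists_between hε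
  have hρK : ρ ∈ ((fun z : ℂ => ‖z‖) '' K)ᶜ := by
    rintro ⟨z, hz, rfl⟩
    exact hρ ⟨z, ⟨hz, by simpa using hρε.le⟩, rfl⟩
  have hcl : IsClosed ((fun z : ℂ => ‖z‖) '' K) := (hK.image continuous_norm).isClosed
  obtain ⟨l, u, hlu, hsub⟩ := mem_nhds_iff_exists_Ioo_subset.1 (hcl.isOpen_compl.mem_nhds hρK)
  refine ⟨ρ, (ρ + u) / 2, hρ0, by linarith [hlu.2], hρε, ?_⟩
  rintro z hz ⟨h1, h2⟩
  exact hsub (a := ‖z‖) ⟨by linarith [hlu.1], by linarith [hlu.2]⟩ ⟨z, hz, rfl⟩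

/-- `T` is almost invertible iff `0 ∉ acc^{ω₁} σ(T)`. -/
theorem almostInv_iff_not_mem_cbd_omega1 (T : X →L[ℂ] X) :
    AlmostInv T ↔ (0 : ℂ) ∉ cbd (spectrum ℂ T) ω₁ := by
  rw [not_mem_cbd_iff (spectrum.isClosed T)]
  constructor
  · rintro ⟨M, N, hM, hN, hMc, hNc, hMN, hu, hcount⟩
    have := hMc.completeSpace_coe
    have h0 : (0 : ℂ) ∈ (spectrum ℂ (restr T M hM))ᶜ := by
      rw [Set.mem_compl_iff, spectrum.zero_mem_iff, not_not]
      exact hu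
    obtain ⟨ε, hε, hsub⟩ := Metric.nhds_basis_closedBall.mem_iff.1
      ((spectrum.isClosed (𝕜 := ℂ) (restr T M hM)).isOpen_compl.mem_nhds h0)
    refine ⟨ε, hε, hcount.mono ?_⟩
    rintro z ⟨hz1, hz2⟩
    exact (spectrum_subset hM hN hMN hMc hNc hz1).resolve_left (hsub hz2)
  · rintro ⟨ε, hε, hc⟩
    obtain ⟨r, s, hr, hrs, hrε, hσ⟩ := exists_radii (spectrum.isCompact T) hε hc
    obtain ⟨P, hPP, hPc, ⟨S, hS, hSc⟩, hW⟩ := riesz T hr hrs hσ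
    have hPPx : ∀ x, P (P x) = P x := fun x => congrArg (fun L : X →L[ℂ] X => L x) hPP
    have hcomm : ∀ {B : X →L[ℂ] X}, Commute B P → ∀ x, B (P x) = P (B x) := fun h x =>
      congrArg (fun L : X →L[ℂ] X => L x) h.eq
    have memM : ∀ x, x ∈ LinearMap.ker P.toLinearMap ↔ P x = 0 := fun x => Iff.rfl
    have memN : ∀ x, x ∈ LinearMap.ker (1 - P : X →L[ℂ] X).toLinearMap ↔ P x = x := fun x => by
      have h : x ∈ LinearMap.ker (1 - P : X →L[ℂ] X).toLinearMap ↔ x - P x = 0 := Iff.rfl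
      rw [h, sub_eq_zero, eq_comm]
    have invM : ∀ {B : X →L[ℂ] X}, Commute B P → ∀ x ∈ LinearMap.ker P.toLinearMap,
        B x ∈ LinearMap.ker P.toLinearMap := by
      intro B hB x hx
      rw [memM] at hx ⊢
      rw [← hcomm hB, hx, map_zero]
    have invN : ∀ {B : X →L[ℂ] X}, Commute B P →
        ∀ x ∈ LinearMap.ker (1 - P : X →L[ℂ] X).toLinearMap,
        B x ∈ LinearMap.ker (1 - P : X →L[ℂ] X).toLinearMap := by
      intro B hB x hx
      rw [memN] at hx ⊢
      rw [← hcomm hB, hx]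
    have hTP : Commute T P := hPc T (Commute.refl T)
    refine ⟨LinearMap.ker P.toLinearMap, LinearMap.ker (1 - P : X →L[ℂ] X).toLinearMap,
      invM hTP, invN hTP, P.isClosed_ker, (1 - P : X →L[ℂ] X).isClosed_ker, ?_, ?_, ?_⟩
    · constructor
      · rw [Submodule.disjoint_def]
        intro x h1 h2
        rw [memM] at h1
        rw [memN] at h2
        rw [← h2, h1]
      · rw [codisjoint_iff, Submodule.eq_top_iff']
        intro x
        refine Submodule.mem_sup.2 ⟨x - P x, ?_, P x, ?_, sub_add_cancel _ _⟩
        · rw [memM, map_sub, hPPx, _root_.sub_self]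
        · rw [memN, hPPx]
    · have hST : Commute S T := (hSc T (Commute.refl T)).symm
      have hSx : ∀ x, T (S x) = x - P x := fun x =>
        congrArg (fun L : X →L[ℂ] X => L x) hS
      have hSx' : ∀ x, S (T x) = x - P x := fun x => by
        rw [← hSx]; exact congrArg (fun L : X →L[ℂ] X => L x) hST.eq
      apply isUnit_restr (S := S) _ (invM (hPc S hST))
      · intro x hx
        rw [memM] at hx
        rw [hSx, hx, _root_.sub_zero]
      · intro x hx
        rw [memM] at hx
        rw [hSx', hx, _root_.sub_zero]
    · refine hc.mono ?_
      intro w hw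
      have key : ∀ B : X →L[ℂ] X, Commute B T →
          (∀ x, P x = x → (algebraMap ℂ (X →L[ℂ] X) w - T) (B x) = x) → False := by
        intro B hB hx
        refine hw ?_
        rw [spectrum.mem_resolventSet_iff, sub_restr]
        apply isUnit_restr (S := B) _ (invN (hPc B hB))
        · intro x h
          exact hx x ((memN x).1 h)
        · intro x h
          have h1 : Commute B (algebraMap ℂ (X →L[ℂ] X) w - T) :=
            (Algebra.commute_algebraMap_right w B).sub_right hB
          rw [← hx x ((memN x).1 h)]
          have h2 := congrArg (fun L : X →L[ℂ] X => L x) h1.eq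
          have h3 : B ((algebraMap ℂ (X →L[ℂ] X) w - T) x) =
            (algebraMap ℂ (X →L[ℂ] X) w - T) (B x) := h2
          rw [hx x ((memN x).1 h), h3, hx x ((memN x).1 h)]
      constructor
      · by_contra hwT
        refine key (resolvent T w) (commute_resolvent (Commute.refl T) w).symm ?_
        intro x _
        exact congrArg (fun L : X →L[ℂ] X => L x) (mul_resolvent T hwT)
      · by_contra hwε
        have hwr : r < ‖w‖ := by
          simp at hwε
          linarith
        obtain ⟨S', hS', hSc'⟩ := hW w hwr
        refine key S' (hSc' T (Commute.refl T)).symm ?_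
        intro x hx
        have : (algebraMap ℂ (X →L[ℂ] X) w - T) (S' x) = P x :=
          congrArg (fun L : X →L[ℂ] X => L x) hS'
        rw [this, hx]
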